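/- Let a ≥ 2 be a natural number, let n ≥ 1, and let B > 0. Then there exists a constant C > 0 (depending only on a and B) such that for every u₀ with 0 < u₀ ≤ 1, every u ∈ ℝ with |u − u₀| ≤ u₀^a, every z ∈ ℂⁿ with ‖z‖ ≤ B and every β ∈ ℝ with |β| ≤ B, one has |u^a · u₀^{−a} − 1| · ‖z‖ + 2a · |u|^{2a−1} · u₀^{−a} · |β| ≤ C · u₀^{a−1}. In particular the vector ( (u^a u₀^{−a} − 1) · z, −2a u^{2a−1} u₀^{−a} β · i ) ∈ ℂⁿ × ℂ has norm at most √2 · C · u₀^{a−1}. -/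

import Mathlib

/-! Since `|u - u₀| ≤ u₀ ^ a ≤ u₀`, we have `|u| ≤ 2 u₀`. Factoring `u - u₀` out of
`u ^ a - u₀ ^ a` leaves `a` terms of degree `a - 1` in `u` and `u₀`, so after division by `u₀ ^ a`
the first coefficient is `O(u₀ ^ (a - 1))`; the second one has this size by homogeneity alone,
because `(2 * a - 1) - a = a - 1`. On the product of normed spaces Mathlib takes the maximum norm,
which the sum of the component norms bounds. -/

section Scaling

variable {K : Type*} [Field K] [LinearOrder K] [IsStrictOrderedRing K] {u u₀ R : K} {a : ℕ}

lemma abs_le_two_mul_of_abs_sub_le_pow (ha : a ≠ 0) (h₀ : 0 < u₀) (h₁ : u₀ ≤ 1)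
    (hu : |u - u₀| ≤ u₀ ^ a) : |u| ≤ 2 * u₀ := by
  have hclose : |u - u₀| ≤ u₀ := hu.trans (pow_le_of_le_one h₀.le h₁ ha)
  rw [abs_le] at hclose ⊢
  constructor <;> linarith

lemma abs_pow_mul_inv_pow_sub_one_le (h₀ : 0 < u₀) (hR : 1 ≤ R) (huR : |u| ≤ R * u₀)
    (hu : |u - u₀| ≤ u₀ ^ a) :
    |u ^ a * (u₀ ^ a)⁻¹ - 1| ≤ a * R ^ (a - 1) * u₀ ^ (a - 1) := by
  have hmax : max |u| |u₀| ≤ R * u₀ :=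
    max_le huR ((abs_of_pos h₀).trans_le (le_mul_of_one_le_left h₀.le hR))
  calc |u ^ a * (u₀ ^ a)⁻¹ - 1| = |u ^ a - u₀ ^ a| / u₀ ^ a := by
        rw [← div_eq_mul_inv, div_sub_one (pow_pos h₀ a).ne', abs_div, abs_of_pos (pow_pos h₀ a)]
    _ ≤ |u - u₀| * a * max |u| |u₀| ^ (a - 1) / u₀ ^ a := by
        gcongr
        exact abs_pow_sub_pow_le u u₀ a
    _ ≤ u₀ ^ a * a * (R * u₀) ^ (a - 1) / u₀ ^ a := by gcongr
    _ = a * R ^ (a - 1) * u₀ ^ (a - 1) := by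
        rw [mul_pow]
        field_simp

lemma abs_pow_add_mul_inv_pow_le (h₀ : 0 < u₀) (huR : |u| ≤ R * u₀) (m k : ℕ) :
    |u| ^ (m + k) * (u₀ ^ m)⁻¹ ≤ R ^ (m + k) * u₀ ^ k := by
  calc |u| ^ (m + k) * (u₀ ^ m)⁻¹ ≤ (R * u₀) ^ (m + k) * (u₀ ^ m)⁻¹ := by gcongr
    _ = R ^ (m + k) * u₀ ^ k := by
        rw [mul_pow, pow_add u₀]
        field_simp

end Scaling

/-- The constant of the comparison of `X₂` with the cylinder model, for exponent `a` and bound `B`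
on the link coordinate `z` and the potential `β`: one summand per component of the difference
vector. The base `2` comes from `|u| ≤ 2 * u₀`. -/
def cylinderComparisonConst (a : ℕ) (B : ℝ) : ℝ :=
  (a * 2 ^ (a - 1) + 2 * a * 2 ^ (2 * a - 1)) * B

lemma cylinderComparisonConst_pos {a : ℕ} {B : ℝ} (ha : a ≠ 0) (hB : 0 < B) :
    0 < cylinderComparisonConst a B := by
  unfold cylinderComparisonConst
  positivity

section Comparison

variable {E : Type*} [SeminormedAddCommGroup E] [NormedSpace ℝ E]

lemma norm_smul_prodMk_ofReal_mul_I_le (c d : ℝ) (z : E) :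
    ‖(c • z, (d : ℂ) * Complex.I)‖ ≤ |c| * ‖z‖ + |d| := by
  simpa [Prod.norm_mk, norm_smul] using
    max_le_add_of_nonneg (mul_nonneg (abs_nonneg c) (norm_nonneg z)) (abs_nonneg d)

theorem stmt_12_general {a : ℕ} (ha : a ≠ 0) {B u₀ u β : ℝ} {z : E} (h₀ : 0 < u₀) (h₁ : u₀ ≤ 1)
    (hu : |u - u₀| ≤ u₀ ^ a) (hz : ‖z‖ ≤ B) (hβ : |β| ≤ B) :
    |u ^ a * (u₀ ^ a)⁻¹ - 1| * ‖z‖ + 2 * a * |u| ^ (2 * a - 1) * (u₀ ^ a)⁻¹ * |β|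
        ≤ cylinderComparisonConst a B * u₀ ^ (a - 1) ∧
      ‖((u ^ a * (u₀ ^ a)⁻¹ - 1) • z,
          ((-(2 * (a : ℝ)) * u ^ (2 * a - 1) * (u₀ ^ a)⁻¹ * β : ℝ) : ℂ) * Complex.I)‖
        ≤ cylinderComparisonConst a B * u₀ ^ (a - 1) := by
  have hu₂ : |u| ≤ 2 * u₀ := abs_le_two_mul_of_abs_sub_le_pow ha h₀ h₁ hu
  have hlink : |u ^ a * (u₀ ^ a)⁻¹ - 1| ≤ a * 2 ^ (a - 1) * u₀ ^ (a - 1) :=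
    abs_pow_mul_inv_pow_sub_one_le h₀ one_le_two hu₂ hu
  have hline : |u| ^ (2 * a - 1) * (u₀ ^ a)⁻¹ ≤ 2 ^ (2 * a - 1) * u₀ ^ (a - 1) := by
    rw [show 2 * a - 1 = a + (a - 1) by omega]
    exact abs_pow_add_mul_inv_pow_le h₀ hu₂ a (a - 1)
  have hsum : |u ^ a * (u₀ ^ a)⁻¹ - 1| * ‖z‖ + 2 * a * |u| ^ (2 * a - 1) * (u₀ ^ a)⁻¹ * |β|
      ≤ cylinderComparisonConst a B * u₀ ^ (a - 1) :=
    calc _ = |u ^ a * (u₀ ^ a)⁻¹ - 1| * ‖z‖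
          + 2 * a * (|u| ^ (2 * a - 1) * (u₀ ^ a)⁻¹) * |β| := by ring
      _ ≤ a * 2 ^ (a - 1) * u₀ ^ (a - 1) * B
          + 2 * a * (2 ^ (2 * a - 1) * u₀ ^ (a - 1)) * B := by gcongr
      _ = cylinderComparisonConst a B * u₀ ^ (a - 1) := by
          unfold cylinderComparisonConst
          ring
  have habs : |-(2 * (a : ℝ)) * u ^ (2 * a - 1) * (u₀ ^ a)⁻¹ * β|
      = 2 * a * |u| ^ (2 * a - 1) * (u₀ ^ a)⁻¹ * |β| := by
    simp [abs_mul, abs_inv, abs_of_pos h₀]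
  exact ⟨hsum, (norm_smul_prodMk_ofReal_mul_I_le _ _ z).trans (habs ▸ hsum)⟩

end Comparison

/-- Key estimate in the comparison of the Lagrangian correction `X₂` with the cylinder model
`u₀^a L × ℝ`: for `|u − u₀| ≤ u₀^a`, `‖z‖ ≤ B`, `|β| ≤ B`, one has
`|u^a u₀^(−a) − 1| ‖z‖ + 2a |u|^(2a−1) u₀^(−a) |β| ≤ C u₀^(a−1)`, and the corresponding
difference vector in `ℂⁿ × ℂ` has norm at most `√2 C u₀^(a−1)`. -/
theorem stmt_12 (a n : ℕ) (ha : 2 ≤ a) (hn : 1 ≤ n) (B : ℝ) (hB : 0 < B) :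
    ∃ C : ℝ, 0 < C ∧
      ∀ u₀ : ℝ, 0 < u₀ → u₀ ≤ 1 →
        ∀ u : ℝ, |u - u₀| ≤ u₀ ^ a →
          ∀ z : EuclideanSpace ℂ (Fin n), ‖z‖ ≤ B →
            ∀ β : ℝ, |β| ≤ B →
              (|u ^ a * (u₀ ^ a)⁻¹ - 1| * ‖z‖
                  + 2 * a * |u| ^ (2 * a - 1) * (u₀ ^ a)⁻¹ * |β| ≤ C * u₀ ^ (a - 1)) ∧
              ‖(((u ^ a * (u₀ ^ a)⁻¹ - 1 : ℝ) • z,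
                  ((-(2 * (a : ℝ)) * u ^ (2 * a - 1) * (u₀ ^ a)⁻¹ * β : ℝ) : ℂ) * Complex.I) :
                  EuclideanSpace ℂ (Fin n) × ℂ)‖
                ≤ Real.sqrt 2 * C * u₀ ^ (a - 1) := by
  have ha₀ : a ≠ 0 := by omega
  refine ⟨cylinderComparisonConst a B, cylinderComparisonConst_pos ha₀ hB,
    fun u₀ h₀ h₁ u hu z hz β hβ ↦ (stmt_12_general ha₀ h₀ h₁ hu hz hβ).imp_right fun h ↦ ?_⟩
  rw [mul_assoc √2]
  exact h.trans (le_mul_of_one_le_left ((norm_nonneg _).trans h) (Real.one_le_sqrt.mpr one_le_two))
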